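/- arXiv:2008.10016 — 4 statements merged into one kernel-verified Lean document; each statement's English description precedes it below -/
import Mathlib

section
/- Let P ⊆ S^d be a simple polybox code and let C_P ⊆ S^d be a polybox code which covers P, i.e. P ⊑ C_P. Then one can pass from C_P by gluing and cutting to a polybox code C̄_P covering P such that for every p ∈ P the set C̄_p = {w ∈ C̄_P : w is not dichotomous to p} (the minimal cover of p inside C̄_P) contains no twin pair. -/
/- Common framework: polybox codes over a finite alphabet `S` with a
complementation `c : S → S` (an involution without fixed points). -/

namespace PolyboxPaper

variable {S : Type} [Fintype S] [DecidableEq S] {d : ℕ}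

/-- Two words are dichotomous: they differ by complementation at some position. -/
def Dich (c : S → S) (v w : Fin d → S) : Prop := ∃ i, v i = c (w i)

instance (c : S → S) (v w : Fin d → S) : Decidable (Dich c v w) :=
  decidable_of_iff (∃ i, v i = c (w i)) Iff.rfl

/-- A polybox code: every two distinct words are dichotomous. -/
def IsCode (c : S → S) (V : Finset (Fin d → S)) : Prop :=
  ∀ v ∈ V, ∀ w ∈ V, v ≠ w → Dich c v w

/-- A cube tiling code: a polybox code with `2 ^ d` words. -/
def CubeTiling (c : S → S) (V : Finset (Fin d → S)) : Prop :=
  IsCode c V ∧ V.card = 2 ^ d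

/-- `v` and `w` form a twin pair in the `i`-th direction. -/
def TwinPair (c : S → S) (v w : Fin d → S) (i : Fin d) : Prop :=
  v i = c (w i) ∧ ∀ j, j ≠ i → v j = w j

/-- A code is twin pair free if no two of its words form a twin pair. -/
def TwinPairFree (c : S → S) (V : Finset (Fin d → S)) : Prop :=
  ∀ v ∈ V, ∀ w ∈ V, ∀ i, ¬ TwinPair c v w i

/-- A single glue-and-cut operation: a twin pair `v, w` of `V` in the `i`-th
direction is replaced by a twin pair `q, t` in the `i`-th direction agreeing
with `v` (and `w`) at all positions `j ≠ i`. -/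
def GCStep (c : S → S) (V W : Finset (Fin d → S)) : Prop :=
  ∃ (v w q t : Fin d → S) (i : Fin d), v ∈ V ∧ w ∈ V ∧ TwinPair c v w i ∧
    TwinPair c q t i ∧ (∀ j, j ≠ i → q j = v j) ∧ W = (V \ {v, w}) ∪ {q, t}

/-- `W` is obtained from `V` by gluing and cutting (finite, possibly empty,
sequence of single glue-and-cut operations); equivalently, `V` and `W` are
strongly equivalent. -/
def GC (c : S → S) (V W : Finset (Fin d → S)) : Prop :=
  Relation.ReflTransGen (GCStep c) V W

/-- Passing from `V` to `W` by gluing and cutting keeping `Q` fixed: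
every intermediate code contains `Q`. -/
def GCFix (c : S → S) (Q V W : Finset (Fin d → S)) : Prop :=
  Relation.ReflTransGen (fun A B => GCStep c A B ∧ Q ⊆ B) V W

/-- A realization: for each coordinate a map `f i : S → Set (X i)` taking
nonempty proper values and sending complementary letters to complementary sets. -/
def IsRealization (c : S → S) (X : Fin d → Type) (f : ∀ i, S → Set (X i)) : Prop :=
  ∀ i s, (f i s).Nonempty ∧ f i s ≠ Set.univ ∧ f i (c s) = (f i s)ᶜ

/-- The box associated to a word by a realization. -/
def box {X : Fin d → Type} (f : ∀ i, S → Set (X i)) (v : Fin d → S) :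
    Set (∀ i, X i) :=
  {x | ∀ i, x i ∈ f i (v i)}

/-- The word `w` is covered by the code `V` (`w ⊑ V`). -/
def CoveredWord (c : S → S) (w : Fin d → S) (V : Finset (Fin d → S)) : Prop :=
  ∀ (X : Fin d → Type) (f : ∀ i, S → Set (X i)), IsRealization c X f →
    box f w ⊆ ⋃ v ∈ V, box f v

/-- `V ⊑ W`: every word of `V` is covered by `W`. -/
def Covered (c : S → S) (V W : Finset (Fin d → S)) : Prop :=
  ∀ v ∈ V, CoveredWord c v W

/-- Equivalent codes: `V ⊑ W` and `W ⊑ V`. -/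
def Equivalent (c : S → S) (V W : Finset (Fin d → S)) : Prop :=
  Covered c V W ∧ Covered c W V

/-- `V ⊑̇ W`: `V ⊑ W` and no word of `V` belongs to any code obtained from `W`
by gluing and cutting. -/
def DotCovered (c : S → S) (V W : Finset (Fin d → S)) : Prop :=
  Covered c V W ∧ ∀ v ∈ V, ∀ W', GC c W W' → v ∉ W'

/-- The density `δ(V, W)`. -/
noncomputable def delta (c : S → S) (V W : Finset (Fin d → S)) : ℕ∞ :=
  W.inf fun w => ((V.filter fun v => ¬ Dich c v w).card : ℕ∞)

/-- `C` is a minimal cover of the word `w`. -/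
def MinCoverWord (c : S → S) (C : Finset (Fin d → S)) (w : Fin d → S) : Prop :=
  IsCode c C ∧ CoveredWord c w C ∧ ∀ q ∈ C, ¬ Dich c q w

/-- `C` is a minimal cover of the code `P`. -/
def MinCoverCode (c : S → S) (C P : Finset (Fin d → S)) : Prop :=
  IsCode c C ∧ Covered c P C ∧ ∀ q ∈ C, ∃ p ∈ P, ¬ Dich c q p

/-- A simple polybox code. -/
def SimpleCode (c : S → S) (V : Finset (Fin d → S)) : Prop :=
  ∀ i : Fin d, ∃ s : S, ∀ v ∈ V, v i = s ∨ v i = c s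

/-- A simple cube tiling code `{s₁, s₁'} × ⋯ × {s_d, s_d'}`. -/
def SimpleCubeTiling (c : S → S) (U : Finset (Fin d → S)) : Prop :=
  ∃ s : Fin d → S, ∀ v : Fin d → S, v ∈ U ↔ ∀ i, v i = s i ∨ v i = c (s i)

/-- Word whose first four coordinates are `x0 x1 x2 x3` and which agrees with
`r` elsewhere. -/
def specialWord (r : Fin d → S) (x0 x1 x2 x3 : S) : Fin d → S := fun i =>
  if (i : ℕ) = 0 then x0 else if (i : ℕ) = 1 then x1 else if (i : ℕ) = 2 then x2
  else if (i : ℕ) = 3 then x3 else r i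

/-- The special pair of 12-word codes (Theorem 1 of the paper). -/
def SpecialPair (c : S → S) (V W : Finset (Fin d → S)) : Prop :=
  ∃ (a b : S) (r : Fin d → S), a ≠ b ∧ a ≠ c b ∧
    V = {specialWord r a (c a) b (c b), specialWord r a b (c b) a,
         specialWord r a (c b) (c b) (c b), specialWord r (c a) a (c b) (c b),
         specialWord r (c a) (c a) a (c b), specialWord r (c a) b (c b) b,
         specialWord r b a b (c b), specialWord r b b b b,
         specialWord r b (c b) (c a) b, specialWord r (c b) a b (c a),
         specialWord r (c b) (c a) b b, specialWord r (c b) (c b) (c b) b} ∧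
    W = {specialWord r (c a) (c a) (c a) b, specialWord r (c a) b a (c a),
         specialWord r b a (c a) a, specialWord r a (c a) (c a) a,
         specialWord r (c a) a (c a) (c a), specialWord r a b b (c a),
         specialWord r b b a a, specialWord r a (c b) (c a) (c a),
         specialWord r (c b) a (c b) a, specialWord r (c b) (c a) a a,
         specialWord r (c b) (c b) a (c a), specialWord r b (c b) a (c b)}

/-- An isomorphism of `S^d`: a permutation of coordinates followed by
position bijections commuting with complementation. -/
def IsIso (c : S → S) (Φ : (Fin d → S) → Fin d → S) : Prop :=
  ∃ (σ : Equiv.Perm (Fin d)) (h : Fin d → S → S),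
    (∀ i, Function.Bijective (h i)) ∧ (∀ i s, h i (c s) = c (h i s)) ∧
    ∀ v i, Φ v i = h i (v (σ i))

/-- The pair `(V, W)` is, up to isomorphism, the special pair. -/
def SpecialPairUpToIso (c : S → S) (V W : Finset (Fin d → S)) : Prop :=
  ∃ Φ, IsIso c Φ ∧
    (SpecialPair c (V.image Φ) (W.image Φ) ∨ SpecialPair c (W.image Φ) (V.image Φ))


/-
Call a letter of a word foreign to `p` when it is neither the letter of `p` at that position nor
its complement. If two words that are not dichotomous to `p` form a twin pair in direction `i`,
then both are foreign to `p` at `i`, and gluing them and cutting along the letter `p i` removes one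
foreign letter from each. In a simple code `P` the notion does not depend on the word `p ∈ P`, so
among the codes obtained from `C` by gluing and cutting, one with the fewest foreign letters has
no such twin pair; it still covers whatever `C` covers.
-/

theorem sum_union_le_add {ι M : Type*} [DecidableEq ι] [AddCommMonoid M] [PartialOrder M]
    [CanonicallyOrderedAdd M] (f : ι → M) (A B : Finset ι) :
    ∑ x ∈ A ∪ B, f x ≤ ∑ x ∈ A, f x + ∑ x ∈ B, f x :=
  le_self_add.trans_eq Finset.sum_union_inter

theorem sum_sdiff_pair_union_pair_lt {ι M : Type*} [DecidableEq ι] [AddCommMonoid M]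
    [PartialOrder M] [IsOrderedCancelAddMonoid M] [CanonicallyOrderedAdd M] {f : ι → M}
    {A : Finset ι} {u w q t : ι} (hu : u ∈ A) (hw : w ∈ A) (huw : u ≠ w) (hq : f q < f u)
    (ht : f t < f w) : ∑ x ∈ (A \ {u, w}) ∪ {q, t}, f x < ∑ x ∈ A, f x := by
  have huwA : {u, w} ⊆ A := Finset.insert_subset hu (Finset.singleton_subset_iff.2 hw)
  have hpair : ∑ x ∈ {q, t}, f x ≤ f q + f t := by
    simpa only [Finset.insert_eq, Finset.sum_singleton] using sum_union_le_add f {q} {t}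
  calc ∑ x ∈ (A \ {u, w}) ∪ {q, t}, f x
      ≤ ∑ x ∈ A \ {u, w}, f x + ∑ x ∈ {q, t}, f x := sum_union_le_add f _ _
    _ ≤ ∑ x ∈ A \ {u, w}, f x + (f q + f t) := by gcongr
    _ < ∑ x ∈ A \ {u, w}, f x + (f u + f w) := by gcongr
    _ = ∑ x ∈ A, f x := by rw [← Finset.sum_pair huw, Finset.sum_sdiff huwA]

omit [Fintype S]

variable {c : S → S} {p q s t u v w : Fin d → S} {i : Fin d}

section TwinPair

omit [DecidableEq S]

theorem TwinPair.ne (hc' : ∀ a, c a ≠ a) (h : TwinPair c u w i) : u ≠ w := by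
  rintro rfl
  exact hc' (u i) h.1.symm

theorem TwinPair.symm (hc : Function.Involutive c) (h : TwinPair c u w i) : TwinPair c w u i :=
  ⟨by rw [h.1, hc], fun j hj => (h.2 j hj).symm⟩

theorem TwinPair.update_eq_update (h : TwinPair c u w i) (a : S) :
    Function.update u i a = Function.update w i a := by
  ext j
  obtain rfl | hj := eq_or_ne j i
  · simp only [Function.update_self]
  · simp only [Function.update_of_ne hj, h.2 j hj]

theorem twinPair_update_update (hc : Function.Involutive c) (v : Fin d → S) (i : Fin d) (a : S) :
    TwinPair c (Function.update v i a) (Function.update v i (c a)) i :=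
  ⟨by simp only [Function.update_self, hc a],
    fun j hj => by simp only [Function.update_of_ne hj]⟩

theorem TwinPair.ne_and_ne_compl_of_not_dich (h : TwinPair c u w i) (hu : ¬ Dich c u p)
    (hw : ¬ Dich c w p) : w i ≠ p i ∧ w i ≠ c (p i) :=
  ⟨fun hwp => hu ⟨i, by rw [h.1, hwp]⟩, fun hwp => hw ⟨i, hwp⟩⟩

theorem TwinPair.box_subset_union {X : Fin d → Type} {f : ∀ i, S → Set (X i)}
    (h : TwinPair c q t i) (hf : IsRealization c X f) (hv : ∀ j, j ≠ i → q j = v j) :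
    box f v ⊆ box f q ∪ box f t := by
  intro x hx
  by_cases hxt : x i ∈ f i (t i)
  · refine Or.inr fun j => ?_
    obtain rfl | hj := eq_or_ne j i
    · exact hxt
    · rw [← h.2 j hj, hv j hj]
      exact hx j
  · refine Or.inl fun j => ?_
    obtain rfl | hj := eq_or_ne j i
    · rw [h.1, (hf j (t j)).2.2]
      exact hxt
    · rw [hv j hj]
      exact hx j

end TwinPair

section Covering

variable {V W : Finset (Fin d → S)}

theorem CoveredWord.gcStep (hv : CoveredWord c v V) (h : GCStep c V W) : CoveredWord c v W := by
  obtain ⟨u, w, q, t, i, -, -, huw, hqt, hqu, rfl⟩ := h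
  intro X f hf x hx
  obtain ⟨y, hyV, hxy⟩ := Set.mem_iUnion₂.1 (hv X f hf hx)
  by_cases hy : y ∈ ({u, w} : Finset (Fin d → S))
  · have hqy : ∀ j, j ≠ i → q j = y j := by
      intro j hj
      obtain rfl | rfl := by simpa only [Finset.mem_insert, Finset.mem_singleton] using hy
      · exact hqu j hj
      · exact (hqu j hj).trans (huw.2 j hj)
    obtain hxq | hxt := hqt.box_subset_union hf hqy hxy
    · exact Set.mem_iUnion₂.2 ⟨q, by simp, hxq⟩
    · exact Set.mem_iUnion₂.2 ⟨t, by simp, hxt⟩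
  · exact Set.mem_iUnion₂.2
      ⟨y, Finset.mem_union_left _ (Finset.mem_sdiff.2 ⟨hyV, hy⟩), hxy⟩

theorem CoveredWord.gc (hv : CoveredWord c v V) (h : GC c V W) : CoveredWord c v W := by
  induction h with
  | refl => exact hv
  | tail _ hstep ih => exact ih.gcStep hstep

end Covering

section Foreign

/-- The positions at which `v` has a letter foreign to `s`, i.e. neither the letter of `s` nor its
complement. -/
def foreignPositions (c : S → S) (s v : Fin d → S) : Finset (Fin d) :=
  {j | v j ≠ s j ∧ v j ≠ c (s j)}

/-- The total number of letters foreign to `s` in the words of `V`: the quantity which suitable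
glue-and-cut operations decrease. -/
def foreignWeight (c : S → S) (s : Fin d → S) (V : Finset (Fin d → S)) : ℕ :=
  ∑ v ∈ V, (foreignPositions c s v).card

theorem foreignPositions_congr (hc : Function.Involutive c)
    (h : ∀ j, p j = s j ∨ p j = c (s j)) : foreignPositions c p = foreignPositions c s := by
  ext v j
  simp only [foreignPositions, Finset.mem_filter_univ]
  obtain hj | hj := h j
  · rw [hj]
  · rw [hj, hc, and_comm]

theorem foreignWeight_congr (hc : Function.Involutive c)
    (h : ∀ j, p j = s j ∨ p j = c (s j)) : foreignWeight c p = foreignWeight c s := by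
  funext V
  simp only [foreignWeight, foreignPositions_congr hc h]

theorem foreignPositions_update {a : S} (ha : a = s i ∨ a = c (s i)) (v : Fin d → S) :
    foreignPositions c s (Function.update v i a) = (foreignPositions c s v).erase i := by
  ext j
  simp only [foreignPositions, Finset.mem_filter_univ, Finset.mem_erase]
  obtain rfl | hj := eq_or_ne j i
  · simp only [Function.update_self]
    tauto
  · simp only [Function.update_of_ne hj, hj, ne_eq, not_false_eq_true, true_and]

theorem card_foreignPositions_update_lt {a : S} (ha : a = s i ∨ a = c (s i))
    (hv : v i ≠ s i ∧ v i ≠ c (s i)) :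
    (foreignPositions c s (Function.update v i a)).card < (foreignPositions c s v).card := by
  rw [foreignPositions_update ha]
  exact Finset.card_erase_lt_of_mem ((Finset.mem_filter_univ i).2 hv)

theorem exists_gcStep_foreignWeight_lt (hc : Function.Involutive c) (hc' : ∀ a, c a ≠ a)
    {V : Finset (Fin d → S)} (hV : ¬ TwinPairFree c {v ∈ V | ¬ Dich c v p}) :
    ∃ W, GCStep c V W ∧ foreignWeight c p W < foreignWeight c p V := by
  simp only [TwinPairFree, Finset.mem_filter] at hV
  push Not at hV
  obtain ⟨u, ⟨huV, hup⟩, w, ⟨hwV, hwp⟩, i, huw⟩ := hV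
  refine ⟨_, ⟨u, w, Function.update u i (p i), Function.update u i (c (p i)), i, huV, hwV, huw,
    twinPair_update_update hc u i (p i), fun j hj => Function.update_of_ne hj _ _, rfl⟩, ?_⟩
  refine sum_sdiff_pair_union_pair_lt huV hwV (huw.ne hc') ?_ ?_
  · exact card_foreignPositions_update_lt (Or.inl rfl)
      ((huw.symm hc).ne_and_ne_compl_of_not_dich hwp hup)
  · rw [huw.update_eq_update]
    exact card_foreignPositions_update_lt (Or.inr rfl) (huw.ne_and_ne_compl_of_not_dich hup hwp)

end Foreign

theorem cover_of_simple_code_twin_pair_free_minimal_covers_general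
    (hc : Function.Involutive c) (hc' : ∀ a, c a ≠ a) {P : Finset (Fin d → S)}
    (hP : SimpleCode c P) (C : Finset (Fin d → S)) :
    ∃ C', GC c C C' ∧ (∀ v, CoveredWord c v C → CoveredWord c v C') ∧
      ∀ p ∈ P, TwinPairFree c {w ∈ C' | ¬ Dich c w p} := by
  choose s hs using hP
  obtain ⟨C', hCC', hmin⟩ : ∃ C', MinimalFor (GC c C) (foreignWeight c s) C' :=
    exists_minimalFor_of_wellFoundedLT _ _ ⟨C, Relation.ReflTransGen.refl⟩
  refine ⟨C', hCC', fun v hv => hv.gc hCC', fun p hp => ?_⟩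
  by_contra htwin
  obtain ⟨W, hstep, hlt⟩ := exists_gcStep_foreignWeight_lt hc hc' htwin
  rw [foreignWeight_congr hc fun j => hs j p hp] at hlt
  exact hlt.not_ge (hmin (hCC'.tail hstep) hlt.le)

/-- Lemma "bez" of the paper. -/
theorem cover_of_simple_code_twin_pair_free_minimal_covers
    {S : Type} [Fintype S] [DecidableEq S] (c : S → S)
    (hc : ∀ s, c (c s) = s) (hc' : ∀ s, c s ≠ s) {d : ℕ}
    (P C : Finset (Fin d → S)) (hP : IsCode c P) (hPsimple : SimpleCode c P)
    (hC : IsCode c C) (hcov : Covered c P C) :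
    ∃ C' : Finset (Fin d → S), GC c C C' ∧ Covered c P C' ∧
      ∀ p ∈ P, ∀ u ∈ C', ∀ w ∈ C',
        ¬ Dich c u p → ¬ Dich c w p → ∀ i, ¬ TwinPair c u w i := by
  obtain ⟨C', hCC', hcov', hfree⟩ :=
    cover_of_simple_code_twin_pair_free_minimal_covers_general hc hc' hPsimple C
  exact ⟨C', hCC', fun p hp => hcov' p (hcov p hp), fun p hp u hu w hw hup hwp =>
    hfree p hp u (Finset.mem_filter.2 ⟨hu, hup⟩) w (Finset.mem_filter.2 ⟨hw, hwp⟩)⟩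

end PolyboxPaper
end

section
/- If V, W ⊆ S^d are equivalent polybox codes which are not strongly equivalent, then one can pass by gluing and cutting from V to a code V̄ and from W to a code W̄ such that there are decompositions V̄ = V¹ ∪ P and W̄ = W¹ ∪ P (disjoint unions), where V¹ ≠ ∅, V¹ ⊑̇ W¹ and W¹ ⊑̇ V¹. -/
/- Common framework: polybox codes over a finite alphabet `S` with a
complementation `c : S → S` (an involution without fixed points). -/

namespace PolyboxPaper

variable {S : Type} [Fintype S] [DecidableEq S] {d : ℕ}

/-!
Gluing and cutting replaces one way of splitting a box in two along a coordinate by another, so it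
keeps the union of the boxes in every realization, the code property and the number of words.
Hence among the pairs `(A, B)` with `A` obtained from `V` and `B` from `W` there is one for which
`#(A ∩ B)` is maximal; take `P = A ∩ B`, `V₁ = A \ B` and `W₁ = B \ A`. The words of `V₁` are
dichotomous to those of `P`, so `W₁` alone must cover them. If some `v ∈ V₁` belonged to a code `W'`
obtained from `W₁`, then `W' ∪ P` would be obtained from `B` and would share with `A` all of `P` and
also `v`, against maximality. Finally `V₁ = ∅` would mean `A ⊆ B`; two equivalent codes, one
inside the other, are equal, so that `V` and `W` would be strongly equivalent.
-/

open Finset Function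

section Dichotomy

variable {α : Type} {c : α → α} {u v w x : Fin d → α}

theorem symm_dich (hc : Involutive c) : Std.Symm (Dich c (d := d)) :=
  ⟨fun _ _ ⟨i, hi⟩ => ⟨i, by rw [hi, hc]⟩⟩

theorem Dich.ne (hc' : ∀ s, c s ≠ s) (h : Dich c v w) : v ≠ w := by
  rintro rfl
  obtain ⟨i, hi⟩ := h
  exact hc' _ hi.symm

/-- The letters `a` and `c a` cannot both be complementary to `x i`, so one of the two dichotomies
takes place at a position other than `i`. -/
theorem Dich.update_of_update (hc' : ∀ s, c s ≠ s) {i : Fin d} {a : α}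
    (h : Dich c x (update u i a)) (h' : Dich c x (update u i (c a))) (b : α) :
    Dich c x (update u i b) := by
  have of_ne {e : α} {j : Fin d} (hji : j ≠ i) (hj : x j = c (update u i e j)) :
      Dich c x (update u i b) :=
    ⟨j, by rwa [update_of_ne hji] at hj ⊢⟩
  obtain ⟨j, hj⟩ := h
  obtain ⟨k, hk⟩ := h'
  rcases ne_or_eq j i with hji | rfl
  · exact of_ne hji hj
  rcases ne_or_eq k j with hkj | rfl
  · exact of_ne hkj hk
  rw [update_self] at hj hk
  exact absurd (hk.symm.trans hj) (hc' (c a))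

theorem twinPair_update {i : Fin d} {a : α} :
    TwinPair c (update u i (c a)) (update u i a) i :=
  ⟨by simp only [update_self], fun j hj => by simp only [update_of_ne hj]⟩

theorem isCode_iff_pairwise {V : Finset (Fin d → α)} :
    IsCode c V ↔ (V : Set (Fin d → α)).Pairwise (Dich c) :=
  Iff.rfl

end Dichotomy

section Covering

variable {α : Type} {c : α → α} {w : Fin d → α} {U V W : Finset (Fin d → α)}

theorem Dich.disjoint_box {v : Fin d → α} {X : Fin d → Type} {f : ∀ i, α → Set (X i)}
    (hf : IsRealization c X f) (h : Dich c v w) : Disjoint (box f v) (box f w) := by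
  obtain ⟨i, hi⟩ := h
  refine Set.disjoint_left.2 fun x hv hw => ?_
  have hxi := hv i
  rw [hi, (hf i (w i)).2.2] at hxi
  exact hxi (hw i)

/-- One letter out of each pair `{s, c s}` has to be selected; in a linear order of the alphabet,
select the smaller one. -/
theorem exists_isRealization (hc : Involutive c) (hc' : ∀ s, c s ≠ s) (d : ℕ) :
    ∃ (X : Fin d → Type) (f : ∀ i, α → Set (X i)), IsRealization c X f := by
  let : LinearOrder α := IsWellOrder.linearOrder WellOrderingRel
  have selected_compl (s : α) : c s < c (c s) ↔ ¬ s < c s := by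
    rw [hc s, not_lt, (hc' s).le_iff_lt]
  let f (s : α) : Set Prop := {p | p ↔ s < c s}
  refine ⟨fun _ => Prop, fun _ => f, fun _ s => ⟨⟨s < c s, Iff.rfl⟩, fun hf => ?_, ?_⟩⟩
  · have hmem : (¬ s < c s) ∈ f s := Set.eq_univ_iff_forall.1 hf _
    exact not_iff_self hmem
  · ext p
    change (p ↔ c s < c (c s)) ↔ ¬ (p ↔ s < c s)
    rw [selected_compl]
    tauto

theorem not_coveredWord_empty (hc : Involutive c) (hc' : ∀ s, c s ≠ s) (w : Fin d → α) :
    ¬ CoveredWord c w ∅ := by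
  intro h
  obtain ⟨X, f, hf⟩ := exists_isRealization hc hc' d
  choose x hx using fun i => (hf i (w i)).1
  simpa using h X f hf hx

theorem CoveredWord.of_forall_not_dich (h : CoveredWord c w V)
    (hU : ∀ v ∈ V, ¬ Dich c v w → v ∈ U) : CoveredWord c w U := by
  intro X f hf x hx
  obtain ⟨v, hv, hxv⟩ := Set.mem_iUnion₂.1 (h X f hf hx)
  have hvw : ¬ Dich c v w := fun hd => Set.disjoint_left.1 (hd.disjoint_box hf) hxv hx
  exact Set.mem_iUnion₂.2 ⟨v, hU v hv hvw, hxv⟩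

theorem CoveredWord.exists_not_dich (hc : Involutive c) (hc' : ∀ s, c s ≠ s)
    (h : CoveredWord c w V) : ∃ v ∈ V, ¬ Dich c v w := by
  by_contra! hV
  exact not_coveredWord_empty hc hc' w (h.of_forall_not_dich fun v hv hd => absurd (hV v hv) hd)

theorem covered_iff_iUnion_subset : Covered c V W ↔ ∀ (X : Fin d → Type) (f : ∀ i, α → Set (X i)),
    IsRealization c X f → ⋃ v ∈ V, box f v ⊆ ⋃ w ∈ W, box f w := by
  simp only [Set.iUnion₂_subset_iff]
  exact ⟨fun h X f hf v hv => h v hv X f hf, fun h v hv X f hf => h X f hf v hv⟩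

theorem Covered.trans (hUV : Covered c U V) (hVW : Covered c V W) : Covered c U W := by
  rw [covered_iff_iUnion_subset] at *
  exact fun X f hf => (hUV X f hf).trans (hVW X f hf)

theorem Equivalent.symm (h : Equivalent c V W) : Equivalent c W V :=
  And.symm h

theorem Equivalent.trans (hUV : Equivalent c U V) (hVW : Equivalent c V W) : Equivalent c U W :=
  ⟨hUV.1.trans hVW.1, hVW.2.trans hUV.2⟩

theorem equivalent_iff_iUnion_eq : Equivalent c V W ↔ ∀ (X : Fin d → Type)
    (f : ∀ i, α → Set (X i)), IsRealization c X f → ⋃ v ∈ V, box f v = ⋃ w ∈ W, box f w := by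
  simp only [Equivalent, covered_iff_iUnion_subset, Set.Subset.antisymm_iff, forall_and]

theorem IsCode.eq_of_subset_of_covered (hc : Involutive c) (hc' : ∀ s, c s ≠ s)
    (hW : IsCode c W) (hVW : V ⊆ W) (hWV : Covered c W V) : V = W := by
  refine hVW.antisymm fun w hw => ?_
  obtain ⟨v, hv, hvw⟩ := (hWV w hw).exists_not_dich hc hc'
  exact (Set.Pairwise.eq (isCode_iff_pairwise.1 hW) (hVW hv) hw hvw) ▸ hv

theorem Covered.sdiff_sdiff [DecidableEq α] (hV : IsCode c V) (h : Covered c V W) :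
    Covered c (V \ W) (W \ V) := by
  intro v hv
  obtain ⟨hvV, hvW⟩ := mem_sdiff.1 hv
  refine (h v hvV).of_forall_not_dich fun w hwW hwv => mem_sdiff.2 ⟨hwW, fun hwV => hwv ?_⟩
  exact hV w hwV v hvV (ne_of_mem_of_not_mem hwW hvW)

end Covering

section GlueAndCut

variable {α : Type} [DecidableEq α] {c : α → α} {u : Fin d → α} {i : Fin d} {a b : α}
  {A B P V W : Finset (Fin d → α)}

/-- The twin pair in the `i`-th direction whose words agree with `u` off `i` and have the letters
`a` and `c a` at `i`. The letter `u i` is irrelevant, so a fixed `u` parametrizes all the twin pairs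
into which one box can be cut in the `i`-th direction. -/
def twins (c : α → α) (u : Fin d → α) (i : Fin d) (a : α) : Finset (Fin d → α) :=
  {update u i a, update u i (c a)}

theorem mem_twins {x : Fin d → α} :
    x ∈ twins c u i a ↔ x = update u i a ∨ x = update u i (c a) := by
  simp only [twins, mem_insert, mem_singleton]

theorem card_twins (hc' : ∀ s, c s ≠ s) : #(twins c u i a) = 2 :=
  card_pair ((update_injective u i).ne (hc' a).symm)

theorem isCode_twins (hc : Involutive c) : IsCode c (twins c u i a) := by
  have hd : Dich c (update u i a) (update u i (c a)) := ⟨i, by simp only [update_self, hc a]⟩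
  have := symm_dich (d := d) hc
  rw [isCode_iff_pairwise, twins, coe_pair, Set.pairwise_pair_of_symm]
  exact fun _ => hd

theorem TwinPair.pair_eq_twins {v w : Fin d → α} (h : TwinPair c v w i)
    (hu : ∀ j, j ≠ i → v j = u j) : ({v, w} : Finset (Fin d → α)) = twins c u i (w i) := by
  have hw : w = update u i (w i) :=
    eq_update_iff.2 ⟨rfl, fun j hj => (h.2 j hj).symm.trans (hu j hj)⟩
  have hv : v = update u i (c (w i)) := eq_update_iff.2 ⟨h.1, hu⟩
  rw [twins, ← hv, ← hw, pair_comm]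

theorem gcStep_iff_twins :
    GCStep c V W ↔ ∃ u i a b, twins c u i a ⊆ V ∧ W = V \ twins c u i a ∪ twins c u i b := by
  constructor
  · rintro ⟨v, w, q, t, i, hv, hw, hvw, hqt, hqv, rfl⟩
    refine ⟨v, i, w i, t i, ?_, ?_⟩
    · rw [← hvw.pair_eq_twins fun _ _ => rfl]
      exact insert_subset hv (singleton_subset_iff.2 hw)
    · rw [hvw.pair_eq_twins fun _ _ => rfl, hqt.pair_eq_twins hqv]
  · rintro ⟨u, i, a, b, hV, rfl⟩
    refine ⟨update u i (c a), update u i a, update u i (c b), update u i b, i,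
      hV (mem_twins.2 (Or.inr rfl)), hV (mem_twins.2 (Or.inl rfl)), twinPair_update,
      twinPair_update, fun j hj => by simp only [update_of_ne hj], ?_⟩
    simp only [twins, pair_comm]

theorem iUnion_box_twins {X : Fin d → Type} {f : ∀ i, α → Set (X i)} (hf : IsRealization c X f) :
    ⋃ v ∈ twins c u i a, box f v = {x | ∀ j, j ≠ i → x j ∈ f j (u j)} := by
  have mem_box_update (x : ∀ j, X j) (e : α) :
      x ∈ box f (update u i e) ↔ x i ∈ f i e ∧ ∀ j, j ≠ i → x j ∈ f j (u j) :=
    forall_update_iff u fun j s => x j ∈ f j s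
  ext x
  simp only [twins, set_biUnion_insert, set_biUnion_singleton, Set.mem_union, mem_box_update,
    (hf i a).2.2, ← or_and_right, Set.mem_compl_iff, em, true_and, Set.mem_ofPred_eq]

theorem GCStep.equivalent (h : GCStep c V W) : Equivalent c V W := by
  obtain ⟨u, i, a, b, hV, rfl⟩ := gcStep_iff_twins.1 h
  refine equivalent_iff_iUnion_eq.2 fun X f hf => ?_
  conv_lhs => rw [← sdiff_union_of_subset hV]
  rw [set_biUnion_union, set_biUnion_union, iUnion_box_twins hf, iUnion_box_twins hf]

theorem IsCode.dich_of_mem_sdiff_twins (hc' : ∀ s, c s ≠ s) (hV : IsCode c V)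
    (hT : twins c u i a ⊆ V) {x y : Fin d → α} (hx : x ∈ V \ twins c u i a)
    (hy : y ∈ twins c u i b) : Dich c x y := by
  obtain ⟨hxV, hxT⟩ := mem_sdiff.1 hx
  have dich_twin {z : Fin d → α} (hz : z ∈ twins c u i a) : Dich c x z :=
    hV x hxV z (hT hz) (ne_of_mem_of_not_mem hz hxT).symm
  have dich_update (e : α) : Dich c x (update u i e) :=
    (dich_twin (mem_twins.2 (Or.inl rfl))).update_of_update hc'
      (dich_twin (mem_twins.2 (Or.inr rfl))) e
  rcases mem_twins.1 hy with rfl | rfl <;> exact dich_update _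

theorem IsCode.disjoint_sdiff_twins (hc' : ∀ s, c s ≠ s) (hV : IsCode c V)
    (hT : twins c u i a ⊆ V) (b : α) : Disjoint (V \ twins c u i a) (twins c u i b) :=
  disjoint_left.2 fun _ hx hxT =>
    (hV.dich_of_mem_sdiff_twins hc' hT hx hxT).ne hc' rfl

theorem GCStep.isCode (hc : Involutive c) (hc' : ∀ s, c s ≠ s) (hV : IsCode c V)
    (h : GCStep c V W) : IsCode c W := by
  obtain ⟨u, i, a, b, hT, rfl⟩ := gcStep_iff_twins.1 h
  have := symm_dich (d := d) hc
  rw [isCode_iff_pairwise, coe_union, Set.pairwise_union_of_symm]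
  refine ⟨(isCode_iff_pairwise.1 hV).mono (coe_subset.2 sdiff_subset), isCode_twins hc, ?_⟩
  exact fun _ hx _ hy _ => hV.dich_of_mem_sdiff_twins hc' hT hx hy

theorem GCStep.symm (hc' : ∀ s, c s ≠ s) (hV : IsCode c V) (h : GCStep c V W) :
    GCStep c W V := by
  obtain ⟨u, i, a, b, hT, rfl⟩ := gcStep_iff_twins.1 h
  refine gcStep_iff_twins.2 ⟨u, i, b, a, subset_union_right, ?_⟩
  rw [union_sdiff_cancel_right (hV.disjoint_sdiff_twins hc' hT b), sdiff_union_of_subset hT]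

theorem GCStep.card_le (hc' : ∀ s, c s ≠ s) (h : GCStep c V W) : #W ≤ #V := by
  obtain ⟨u, i, a, b, hT, rfl⟩ := gcStep_iff_twins.1 h
  calc #(V \ twins c u i a ∪ twins c u i b)
      ≤ #(V \ twins c u i a) + #(twins c u i b) := card_union_le _ _
    _ = #(V \ twins c u i a) + #(twins c u i a) := by rw [card_twins hc', card_twins hc']
    _ = #V := card_sdiff_add_card_eq_card hT

theorem GCStep.union_right (h : GCStep c A B) (hd : Disjoint A P) :
    GCStep c (A ∪ P) (B ∪ P) := by
  obtain ⟨u, i, a, b, hT, rfl⟩ := gcStep_iff_twins.1 h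
  refine gcStep_iff_twins.2 ⟨u, i, a, b, hT.trans subset_union_left, ?_⟩
  rw [union_sdiff_distrib, sdiff_eq_self_of_disjoint (hd.mono_left hT).symm, union_right_comm]

theorem GCStep.disjoint (hc' : ∀ s, c s ≠ s) (hA : IsCode c (A ∪ P)) (hd : Disjoint A P)
    (h : GCStep c A B) : Disjoint B P := by
  obtain ⟨u, i, a, b, hT, rfl⟩ := gcStep_iff_twins.1 h
  have hP : P ⊆ (A ∪ P) \ twins c u i a :=
    subset_sdiff.2 ⟨subset_union_right, (hd.mono_left hT).symm⟩
  refine disjoint_union_left.2 ⟨hd.mono_left sdiff_subset, ?_⟩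
  exact ((hA.disjoint_sdiff_twins hc' (hT.trans subset_union_left) b).mono_left hP).symm

theorem GC.equivalent (h : GC c V W) : Equivalent c V W := by
  induction h with
  | refl => exact equivalent_iff_iUnion_eq.2 fun _ _ _ => rfl
  | tail _ hstep ih => exact ih.trans hstep.equivalent

theorem GC.isCode (hc : Involutive c) (hc' : ∀ s, c s ≠ s) (hV : IsCode c V) (h : GC c V W) :
    IsCode c W := by
  induction h with
  | refl => exact hV
  | tail _ hstep ih => exact hstep.isCode hc hc' ih

theorem GC.symm (hc : Involutive c) (hc' : ∀ s, c s ≠ s) (hV : IsCode c V) (h : GC c V W) :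
    GC c W V := by
  induction h with
  | refl => exact .refl
  | tail hgc hstep ih => exact .head (hstep.symm hc' (GC.isCode hc hc' hV hgc)) ih

theorem GC.card_le (hc' : ∀ s, c s ≠ s) (h : GC c V W) : #W ≤ #V := by
  induction h with
  | refl => exact le_rfl
  | tail _ hstep ih => exact (hstep.card_le hc').trans ih

theorem GC.union_right (hc : Involutive c) (hc' : ∀ s, c s ≠ s) (hA : IsCode c (A ∪ P))
    (hd : Disjoint A P) (h : GC c A B) : GC c (A ∪ P) (B ∪ P) := by
  suffices GC c (A ∪ P) (B ∪ P) ∧ Disjoint B P from this.1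
  induction h with
  | refl => exact ⟨.refl, hd⟩
  | tail _ hstep ih =>
    obtain ⟨hgc, hd⟩ := ih
    exact ⟨hgc.tail (hstep.union_right hd), hstep.disjoint hc' (hgc.isCode hc hc' hA) hd⟩

end GlueAndCut

section MaximalIntersection

variable {α : Type} [DecidableEq α] {c : α → α}

theorem exists_gc_card_inter_max (hc' : ∀ s, c s ≠ s) (V W : Finset (Fin d → α)) :
    ∃ A B, GC c V A ∧ GC c W B ∧ ∀ A' B', GC c V A' → GC c W B' → #(A' ∩ B') ≤ #(A ∩ B) := by
  let sizes : Set ℕ := {n | ∃ A B, GC c V A ∧ GC c W B ∧ #(A ∩ B) = n}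
  have hbdd : BddAbove sizes := by
    refine ⟨#V, ?_⟩
    rintro _ ⟨A, B, hVA, -, rfl⟩
    exact (card_le_card inter_subset_left).trans (hVA.card_le hc')
  obtain ⟨_, ⟨A, B, hVA, hWB, rfl⟩, hmax⟩ :=
    hbdd.exists_isGreatest_of_nonempty ⟨_, V, W, .refl, .refl, rfl⟩
  exact ⟨A, B, hVA, hWB, fun A' B' hVA' hWB' => hmax ⟨A', B', hVA', hWB', rfl⟩⟩

theorem Covered.dotCovered_sdiff_of_card_inter_max (hc : Involutive c) (hc' : ∀ s, c s ≠ s)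
    {A B : Finset (Fin d → α)} (hA : IsCode c A) (hB : IsCode c B) (hAB : Covered c A B)
    (hmax : ∀ B', GC c B B' → #(A ∩ B') ≤ #(A ∩ B)) : DotCovered c (A \ B) (B \ A) := by
  refine ⟨hAB.sdiff_sdiff hA, fun v hv B₁ hB₁ hvB₁ => ?_⟩
  obtain ⟨hvA, hvB⟩ := mem_sdiff.1 hv
  have hgc : GC c B (B₁ ∪ B ∩ A) := by
    have h := hB₁.union_right hc hc' (P := B ∩ A) (by rwa [sdiff_union_inter])
      (disjoint_sdiff_inter B A)
    rwa [sdiff_union_inter] at h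
  have hlt : A ∩ B ⊂ A ∩ (B₁ ∪ B ∩ A) := by
    refine ssubset_iff_of_subset (fun x hx => ?_) |>.2 ⟨v, ?_, fun h => hvB (mem_inter.1 h).2⟩
    · exact mem_inter.2 ⟨(mem_inter.1 hx).1, mem_union_right _ (inter_comm A B ▸ hx)⟩
    · exact mem_inter.2 ⟨hvA, mem_union_left _ hvB₁⟩
  exact (card_lt_card hlt).not_ge (hmax _ hgc)

end MaximalIntersection

theorem not_strongly_equivalent_decomposition_general
    {S : Type} [DecidableEq S] (c : S → S)
    (hc : ∀ s, c (c s) = s) (hc' : ∀ s, c s ≠ s) {d : ℕ}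
    (V W : Finset (Fin d → S)) (hV : IsCode c V) (hW : IsCode c W)
    (heq : Equivalent c V W) (hnse : ¬ GC c V W) :
    ∃ V' W' V₁ W₁ P : Finset (Fin d → S),
      GC c V V' ∧ GC c W W' ∧ V' = V₁ ∪ P ∧ W' = W₁ ∪ P ∧
      Disjoint V₁ P ∧ Disjoint W₁ P ∧ V₁.Nonempty ∧
      DotCovered c V₁ W₁ ∧ DotCovered c W₁ V₁ := by
  obtain ⟨A, B, hVA, hWB, hmax⟩ := exists_gc_card_inter_max hc' V W
  have hA : IsCode c A := hVA.isCode hc hc' hV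
  have hB : IsCode c B := hWB.isCode hc hc' hW
  have hAB : Equivalent c A B := hVA.equivalent.symm.trans (heq.trans hWB.equivalent)
  have hne : (A \ B).Nonempty := sdiff_nonempty.2 fun hsub => hnse <| by
    obtain rfl : A = B := hB.eq_of_subset_of_covered hc hc' hsub hAB.2
    exact hVA.trans (hWB.symm hc hc' hW)
  have hmaxB (B') (h : GC c B B') : #(A ∩ B') ≤ #(A ∩ B) := hmax A B' hVA (hWB.trans h)
  have hmaxA (A') (h : GC c A A') : #(B ∩ A') ≤ #(B ∩ A) := by
    simpa only [inter_comm B] using hmax A' B (hVA.trans h) hWB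
  exact ⟨A, B, A \ B, B \ A, A ∩ B, hVA, hWB, (sdiff_union_inter A B).symm,
    by rw [inter_comm, sdiff_union_inter], disjoint_sdiff_inter A B,
    inter_comm A B ▸ disjoint_sdiff_inter B A, hne,
    hAB.1.dotCovered_sdiff_of_card_inter_max hc hc' hA hB hmaxB,
    hAB.2.dotCovered_sdiff_of_card_inter_max hc hc' hB hA hmaxA⟩

/-- Lemma "sind" of the paper. -/
theorem not_strongly_equivalent_decomposition
    {S : Type} [Fintype S] [DecidableEq S] (c : S → S)
    (hc : ∀ s, c (c s) = s) (hc' : ∀ s, c s ≠ s) {d : ℕ}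
    (V W : Finset (Fin d → S)) (hV : IsCode c V) (hW : IsCode c W)
    (heq : Equivalent c V W) (hnse : ¬ GC c V W) :
    ∃ V' W' V₁ W₁ P : Finset (Fin d → S),
      GC c V V' ∧ GC c W W' ∧ V' = V₁ ∪ P ∧ W' = W₁ ∪ P ∧
      Disjoint V₁ P ∧ Disjoint W₁ P ∧ V₁.Nonempty ∧
      DotCovered c V₁ W₁ ∧ DotCovered c W₁ V₁ :=
  not_strongly_equivalent_decomposition_general c hc hc' V W hV hW heq hnse

end PolyboxPaper
end

section
/- Let v ∈ S^d and let C_v ⊆ S^d be a minimal cover of v with at most 4 words. Then one can pass from C_v by gluing and cutting to a polybox code C̄_v which contains the word v. -/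
/- Common framework: polybox codes over a finite alphabet `S` with a
complementation `c : S → S` (an involution without fixed points). -/

namespace PolyboxPaper

variable {S : Type} [Fintype S] [DecidableEq S] {d : ℕ}

/-!
If every word of a cover of `v` has the letter `s` or `s'` in direction `i`, then the words with
`s` cover the word obtained from `v` by putting `s` in direction `i`, and likewise for `s'`. Gluing
the two halves recursively produces these two words, a twin pair from which one more step gives `v`.

A cover of `v ∉ C` by at most four words always admits such a cut. Otherwise each direction in
which the cover differs from `v` has a letter occurring in a single word `w`, and following
dichotomies leads to a cover `{w, b, f, g}` where `b` lies opposite `w`, while each of `f` and `g`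
is opposite both `w` and `b` in a direction of its own. Facets of opposite words match, so apart
from these directions every letter of `f` and `g` is the letter of `w` or of `v`; hence `f` and `g`
are not dichotomous.
-/

section Selections

variable {α : Type} {c : α → α}

/-- A set of letters without complementary pairs: the letters whose sets are required to contain
a point, in one coordinate. -/
def IsConsistent (c : α → α) (T : Set α) : Prop := ∀ s ∈ T, c s ∉ T

/-- A set containing exactly one letter of each complementary pair. Selections are the points of
the universal realization, in which a letter `s` stands for the set of selections containing it. -/
def IsSelection (c : α → α) (P : Set α) : Prop := ∀ s, c s ∈ P ↔ s ∉ P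

theorem isConsistent_singleton (hc' : ∀ s, c s ≠ s) (a : α) : IsConsistent c {a} := by
  simpa [IsConsistent] using hc' a

theorem isConsistent_triple (hc : Function.Involutive c) (hc' : ∀ s, c s ≠ s) {a b x : α}
    (hab : a ≠ c b) (hxa : x ≠ c a) (hxb : x ≠ c b) : IsConsistent c {a, b, x} := by
  intro s hs
  have := hc a
  have := hc b
  have := hc x
  simp only [Set.mem_insert_iff, Set.mem_singleton_iff] at hs ⊢
  grind

theorem isConsistent_pair (hc : Function.Involutive c) (hc' : ∀ s, c s ≠ s) {a b : α}
    (hab : a ≠ c b) : IsConsistent c {a, b} := by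
  simpa using isConsistent_triple hc hc' hab (fun h => hab (by rw [h, hc])) (hc' b).symm

theorem IsConsistent.exists_isSelection (hc : Function.Involutive c) (hc' : ∀ s, c s ≠ s)
    {T : Set α} (hT : IsConsistent c T) : ∃ P, IsSelection c P ∧ T ⊆ P := by
  obtain ⟨_, -⟩ := exists_wellFoundedLT α
  -- Outside `T ∪ c '' T`, choose the smaller letter of each complementary pair.
  refine ⟨{s | s ∈ T ∨ c s ∉ T ∧ s < c s}, fun s => ?_, fun s hs => Or.inl hs⟩
  have h_flip : c s < s ↔ ¬ s < c s := by
    rw [not_lt, (hc' s).le_iff_lt]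
  have hs := hT s
  have hcs := hT (c s)
  simp only [Set.mem_ofPred_eq, hc s] at hcs ⊢
  tauto

theorem exists_isSelection_mem (hc : Function.Involutive c) (hc' : ∀ s, c s ≠ s) (s : α) :
    ∃ P, IsSelection c P ∧ s ∈ P := by
  obtain ⟨P, hP, hsP⟩ := (isConsistent_singleton hc' s).exists_isSelection hc hc'
  exact ⟨P, hP, hsP rfl⟩

theorem isRealization_selections {d : ℕ} (hc : Function.Involutive c) (hc' : ∀ s, c s ≠ s) :
    IsRealization c (fun _ : Fin d => {P : Set α // IsSelection c P}) fun _ s => {P | s ∈ P.1} := by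
  refine fun _ s => ⟨?_, ?_, Set.ext fun P => P.2 s⟩
  · obtain ⟨P, hP, hs⟩ := exists_isSelection_mem hc hc' s
    exact ⟨⟨P, hP⟩, hs⟩
  · obtain ⟨P, hP, hs⟩ := exists_isSelection_mem hc hc' (c s)
    exact (Set.ne_univ_iff_exists_notMem _).2 ⟨⟨P, hP⟩, (hP s).1 hs⟩

end Selections

section Covers

variable {α : Type} {c : α → α} {d : ℕ}

/-- The combinatorial form of `CoveredWord c v C`: whenever a point is required to lie in the sets
of the letters `T i`, among them `v i`, some word of `C` is compatible with the requirement. -/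
def FormallyCovered (c : α → α) (v : Fin d → α) (C : Finset (Fin d → α)) : Prop :=
  ∀ T : Fin d → Set α, (∀ i, IsConsistent c (T i)) → (∀ i, v i ∈ T i) →
    ∃ q ∈ C, ∀ i, c (q i) ∉ T i

/-- The combinatorial form of `MinCoverWord c C v`. -/
structure IsFormalMinCover (c : α → α) (C : Finset (Fin d → α)) (v : Fin d → α) : Prop where
  isCode : IsCode c C
  covered : FormallyCovered c v C
  not_dich : ∀ q ∈ C, ∀ i, q i ≠ c (v i)

theorem Dich.symm (hc : Function.Involutive c) {v w : Fin d → α} : Dich c v w → Dich c w v :=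
  fun ⟨i, hi⟩ => ⟨i, by rw [hi, hc]⟩

theorem CoveredWord.formallyCovered (hc : Function.Involutive c) (hc' : ∀ s, c s ≠ s)
    {v : Fin d → α} {C : Finset (Fin d → α)} (hcov : CoveredWord c v C) :
    FormallyCovered c v C := by
  intro T hT hv
  choose P hP hTP using fun i => (hT i).exists_isSelection hc hc'
  have hmem := hcov _ _ (isRealization_selections hc hc')
    (show (fun i => ⟨P i, hP i⟩) ∈ box _ v from fun i => hTP i (hv i))
  obtain ⟨q, hq, hqP⟩ := Set.mem_iUnion₂.1 hmem
  exact ⟨q, hq, fun i hi => (hP i (q i)).1 (hTP i hi) (hqP i)⟩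

theorem FormallyCovered.nonempty (hc' : ∀ s, c s ≠ s) {v : Fin d → α}
    {C : Finset (Fin d → α)} (hcov : FormallyCovered c v C) : C.Nonempty := by
  obtain ⟨q, hq, -⟩ := hcov (fun i => {v i}) (fun i => isConsistent_singleton hc' (v i))
    fun i => rfl
  exact ⟨q, hq⟩

theorem FormallyCovered.isFormalMinCover_filter [DecidableEq α] (hc : Function.Involutive c)
    {v : Fin d → α} {C : Finset (Fin d → α)} (hcov : FormallyCovered c v C) (hcode : IsCode c C) :
    IsFormalMinCover c (C.filter fun q => ¬ Dich c q v) v where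
  isCode p hp q hq := hcode p (Finset.mem_of_mem_filter p hp) q (Finset.mem_of_mem_filter q hq)
  covered T hT hv := by
    obtain ⟨q, hq, hqT⟩ := hcov T hT hv
    refine ⟨q, Finset.mem_filter.2 ⟨hq, fun ⟨i, hi⟩ => hqT i ?_⟩, hqT⟩
    rw [hi, hc]
    exact hv i
  not_dich q hq i hi := (Finset.mem_filter.1 hq).2 ⟨i, hi⟩

namespace IsFormalMinCover

variable {C : Finset (Fin d → α)} {v : Fin d → α}

theorem notMem_of_forall_dich (hc : Function.Involutive c) (hc' : ∀ s, c s ≠ s)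
    (hC : IsFormalMinCover c C v) {Q : Finset (Fin d → α)}
    (hQ : ∀ z ∈ Q, ∀ q ∈ C, Dich c z q) : v ∉ Q := by
  obtain ⟨q, hq⟩ := hC.covered.nonempty hc'
  intro hv
  obtain ⟨i, hi⟩ := (hQ v hv q hq).symm hc
  exact hC.not_dich q hq i hi

theorem exists_apply_ne (hc' : ∀ s, c s ≠ s) (hC : IsFormalMinCover c C v) (hv : v ∉ C) :
    ∃ w ∈ C, ∃ i, w i ≠ v i := by
  obtain ⟨w, hw⟩ := hC.covered.nonempty hc'
  exact ⟨w, hw, Function.ne_iff.1 fun h => hv (h ▸ hw)⟩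

theorem apply_ne_of_eq_compl (hc : Function.Involutive c) (hC : IsFormalMinCover c C v)
    {w : Fin d → α} (hw : w ∈ C) {i : Fin d} {s : α} (hs : s = c (w i)) : s ≠ v i :=
  fun h => hC.not_dich w hw i (by rw [← h, hs, hc])

/-- The cover is examined just across the facet of the box of `w` in direction `i`, at a point
lying also in the sets of the letters `x k`. -/
theorem exists_opposite (hc : Function.Involutive c) (hc' : ∀ s, c s ≠ s)
    (hC : IsFormalMinCover c C v) {w : Fin d → α} (hw : w ∈ C) {i : Fin d} (hwi : w i ≠ v i)
    {x : Fin d → α} (hxv : ∀ k, x k ≠ c (v k)) (hxw : ∀ k, k ≠ i → x k ≠ c (w k)) :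
    ∃ r ∈ C, r i = c (w i) ∧ ∀ k, k ≠ i → r k ≠ c (x k) := by
  have hvw : ∀ k, v k ≠ c (w k) := fun k h => hC.apply_ne_of_eq_compl hc hw h rfl
  obtain ⟨r, hr, hrT⟩ := hC.covered (fun k => if k = i then {v i, c (w i)} else {v k, w k, x k})
    (fun k => by
      split_ifs with hk
      · exact isConsistent_pair hc hc' (by rw [hc]; exact hwi.symm)
      · exact isConsistent_triple hc hc' (hvw k) (hxv k) (hxw k hk))
    (fun k => by split_ifs with hk <;> simp [hk])
  have hri : r i ≠ w i := fun h => hrT i (by simp [h])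
  have hr_off : ∀ k, k ≠ i → r k ≠ c (w k) ∧ r k ≠ c (x k) := fun k hk =>
    ⟨fun h => hrT k (by simp [hk, h, hc (w k)]), fun h => hrT k (by simp [hk, h, hc (x k)])⟩
  obtain ⟨k, hk⟩ := hC.isCode r hr w hw fun h => hri (congrFun h i)
  obtain rfl : k = i := by_contra fun hki => (hr_off k hki).1 hk
  exact ⟨r, hr, hk, fun j hj => (hr_off j hj).2⟩

theorem exists_apply_eq_compl (hc : Function.Involutive c) (hc' : ∀ s, c s ≠ s)
    (hC : IsFormalMinCover c C v) {w : Fin d → α} (hw : w ∈ C) {i : Fin d} (hwi : w i ≠ v i) :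
    ∃ r ∈ C, r i = c (w i) := by
  obtain ⟨r, hr, hri, -⟩ := hC.exists_opposite hc hc' hw hwi (fun k => (hc' (v k)).symm)
    fun k _ h => hC.apply_ne_of_eq_compl hc hw h rfl
  exact ⟨r, hr, hri⟩

/-- Within the box of `v`, the facet of `w` in direction `i` contains the facet of `q`, because no
word other than `w` can lie across the latter. -/
theorem apply_eq_of_unique (hc : Function.Involutive c) (hc' : ∀ s, c s ≠ s)
    (hC : IsFormalMinCover c C v) {w q : Fin d → α} {i k : Fin d}
    (hw : w ∈ C) (huniq : ∀ r ∈ C, r i = w i → r = w) (hq : q ∈ C) (hqi : q i = c (w i))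
    (hki : k ≠ i) (hwk : w k ≠ v k) : q k = w k := by
  by_contra hqk
  obtain ⟨r, hr, hri, hrx⟩ := hC.exists_opposite hc hc' hq (hC.apply_ne_of_eq_compl hc hw hqi)
    (x := Function.update v k (c (w k)))
    (fun j => by
      rcases eq_or_ne j k with rfl | hj
      · simpa using hc.injective.ne hwk
      · simpa [hj] using (hc' (v j)).symm)
    (fun j _ => by
      rcases eq_or_ne j k with rfl | hj
      · simpa using hc.injective.ne (Ne.symm hqk)
      · simpa [hj] using fun h => hC.apply_ne_of_eq_compl hc hq h rfl)
  obtain rfl : r = w := huniq r hr (by rw [hri, hqi, hc])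
  exact hrx k hki (by simp [hc (r k)])

theorem exists_unique_letter (hc : Function.Involutive c) (hc' : ∀ s, c s ≠ s)
    (hC : IsFormalMinCover c C v) (hcard : C.card ≤ 4) {w q : Fin d → α} {i : Fin d}
    (hw : w ∈ C) (hwi : w i ≠ v i) (hq : q ∈ C) (hqw : q i ≠ w i) (hqw' : q i ≠ c (w i)) :
    ∃ u ∈ C, u i ≠ v i ∧ ∀ r ∈ C, r i = u i → r = u := by
  classical
  by_contra! hno
  obtain ⟨b, hb, hbi⟩ := hC.exists_apply_eq_compl hc hc' hw hwi
  obtain ⟨w', hw', hwi', hww'⟩ := hno w hw hwi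
  obtain ⟨b', hb', hbi', hbb'⟩ := hno b hb (hC.apply_ne_of_eq_compl hc hw hbi)
  have hsub : ({q, w, w', b, b'} : Finset (Fin d → α)) ⊆ C := by
    simp only [Finset.insert_subset_iff, Finset.singleton_subset_iff]
    exact ⟨hq, hw, hw', hb, hb'⟩
  have hfive : ({q, w, w', b, b'} : Finset (Fin d → α)).card = 5 := by
    have := hc' (w i)
    repeat rw [Finset.card_insert_of_notMem (by grind)]
    rw [Finset.card_singleton]
  have := Finset.card_le_card hsub
  omega

theorem exists_clash_of_unique (hc : Function.Involutive c) (hc' : ∀ s, c s ≠ s)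
    (hC : IsFormalMinCover c C v) {w f : Fin d → α} {i : Fin d} (hw : w ∈ C)
    (hno : ∀ k, w k ≠ v k → ∃ q ∈ C, q k ≠ w k ∧ q k ≠ c (w k))
    (huniq : ∀ r ∈ C, r i = w i → r = w)
    (hf : f ∈ C) (hfi : f i ≠ w i ∧ f i ≠ c (w i)) :
    ∃ k, f k = c (w k) ∧ (∀ q ∈ C, q i = c (w i) → q k = w k) ∧
      ∃ g ∈ C, (g i ≠ w i ∧ g i ≠ c (w i)) ∧ g k ≠ w k ∧ g k ≠ c (w k) := by
  obtain ⟨k, hfk⟩ := hC.isCode f hf w hw fun h => hfi.1 (congrFun h i)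
  have hki : k ≠ i := fun h => hfi.2 (h ▸ hfk)
  have hwk : w k ≠ v k := fun h => hC.not_dich f hf k (by rw [hfk, h])
  have hopp : ∀ q ∈ C, q i = c (w i) → q k = w k := fun q hq hqi =>
    hC.apply_eq_of_unique hc hc' hw huniq hq hqi hki hwk
  obtain ⟨g, hg, hgk⟩ := hno k hwk
  exact ⟨k, hfk, hopp, g, hg,
    ⟨fun h => hgk.1 (congrFun (huniq g hg h) k), fun h => hgk.1 (hopp g hg h)⟩, hgk⟩

theorem not_dich_of_unique_of_unique (hc : Function.Involutive c) (hc' : ∀ s, c s ≠ s)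
    (hC : IsFormalMinCover c C v) {w f g : Fin d → α} {k l : Fin d}
    (hw : w ∈ C) (hf : f ∈ C) (hg : g ∈ C) (hfk : f k = c (w k)) (hgl : g l = c (w l))
    (hfuniq : ∀ r ∈ C, r k = f k → r = f) (hguniq : ∀ r ∈ C, r l = g l → r = g)
    (hgk : g k ≠ w k) (hfl : f l ≠ w l) : ¬ Dich c f g := by
  rintro ⟨j, hj⟩
  have hjk : j ≠ k := by
    rintro rfl
    exact hgk (hc.injective (hj.symm.trans hfk))
  have hjl : j ≠ l := by
    rintro rfl
    exact hfl (by rw [hj, hgl, hc])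
  have hwf : w j = f j := hC.apply_eq_of_unique hc hc' hf hfuniq hw (by rw [hfk, hc]) hjk
    (hC.apply_ne_of_eq_compl hc hg hj)
  have hwg : w j = g j := hC.apply_eq_of_unique hc hc' hg hguniq hw (by rw [hgl, hc]) hjl
    (hC.apply_ne_of_eq_compl hc hf (by rw [hj, hc]))
  exact hc' (g j) (by rw [← hj, ← hwf, hwg])

/-- Five words may form a pinwheel, which has no cut. -/
theorem exists_cut (hc : Function.Involutive c) (hc' : ∀ s, c s ≠ s)
    (hC : IsFormalMinCover c C v) (hcard : C.card ≤ 4) (hv : v ∉ C) :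
    ∃ w ∈ C, ∃ i, w i ≠ v i ∧ ∀ q ∈ C, q i = w i ∨ q i = c (w i) := by
  classical
  by_contra! hno
  obtain ⟨w₀, hw₀, i, hw₀i⟩ := hC.exists_apply_ne hc' hv
  obtain ⟨q, hq, hqi, hqi'⟩ := hno w₀ hw₀ i hw₀i
  obtain ⟨w, hw, hwi, hwuniq⟩ := hC.exists_unique_letter hc hc' hcard hw₀ hw₀i hq hqi hqi'
  obtain ⟨b, hb, hbi⟩ := hC.exists_apply_eq_compl hc hc' hw hwi
  obtain ⟨f, hf, hfi⟩ := hno w hw i hwi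
  obtain ⟨k, hfk, hoppk, g, hg, hgi, hgk⟩ :=
    hC.exists_clash_of_unique hc hc' hw (hno w hw) hwuniq hf hfi
  obtain ⟨l, hgl, hoppl, f', hf', hf'i, hf'l⟩ :=
    hC.exists_clash_of_unique hc hc' hw (hno w hw) hwuniq hg hgi
  have hbk : b k = w k := hoppk b hb hbi
  have hbl : b l = w l := hoppl b hb hbi
  have hC_eq : {w, b, f, g} = C := by
    refine Finset.eq_of_subset_of_card_le ?_ (hcard.trans_eq ?_)
    · simp only [Finset.insert_subset_iff, Finset.singleton_subset_iff]
      exact ⟨hw, hb, hf, hg⟩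
    · have := hc' (w i)
      repeat rw [Finset.card_insert_of_notMem (by grind)]
      rw [Finset.card_singleton]
  have hmem : ∀ r ∈ C, r = w ∨ r = b ∨ r = f ∨ r = g := by
    simp [← hC_eq]
  obtain rfl : f = f' := by grind [hmem f' hf']
  have hfuniq : ∀ r ∈ C, r k = f k → r = f := fun r hr hrk => by grind [hmem r hr, hc' (w k)]
  have hguniq : ∀ r ∈ C, r l = g l → r = g := fun r hr hrl => by grind [hmem r hr, hc' (w l)]
  have hfg : f ≠ g := fun hfg => hgk.2 (hfg ▸ hfk)
  exact hC.not_dich_of_unique_of_unique hc hc' hw hf hg hfk hgl hfuniq hguniq hgk.1 hf'l.1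
    (hC.isCode f hf g hg hfg)

theorem filter_apply_eq [DecidableEq α] (hc : Function.Involutive c) (hc' : ∀ s, c s ≠ s)
    (hC : IsFormalMinCover c C v) {i : Fin d} {s : α} (hs : s ≠ c (v i))
    (hcut : ∀ q ∈ C, q i = s ∨ q i = c s) :
    IsFormalMinCover c (C.filter fun q => q i = s) (Function.update v i s) where
  isCode p hp q hq := hC.isCode p (Finset.mem_of_mem_filter p hp) q (Finset.mem_of_mem_filter q hq)
  covered T hT hvT := by
    obtain ⟨q, hq, hqT⟩ := hC.covered (Function.update T i {v i, s})
      (fun k => by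
        rcases eq_or_ne k i with rfl | hk
        · simpa using isConsistent_pair hc hc' fun h => hs (by rw [h, hc])
        · simpa [hk] using hT k)
      (fun k => by
        rcases eq_or_ne k i with rfl | hk
        · simp
        · simpa [hk] using hvT k)
    have hqi : q i = s := (hcut q hq).resolve_right fun h => hqT i (by simp [h, hc s])
    refine ⟨q, Finset.mem_filter.2 ⟨hq, hqi⟩, fun k => ?_⟩
    rcases eq_or_ne k i with rfl | hk
    · rw [hqi]
      exact hT k s (by simpa using hvT k)
    · simpa [hk] using hqT k
  not_dich q hq k := by
    obtain ⟨hq, hqi⟩ := Finset.mem_filter.1 hq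
    rcases eq_or_ne k i with rfl | hk
    · simpa [hqi] using (hc' s).symm
    · simpa [hk] using hC.not_dich q hq k

theorem exists_halves [DecidableEq α] (hc : Function.Involutive c) (hc' : ∀ s, c s ≠ s)
    (hC : IsFormalMinCover c C v) (hcard : C.card ≤ 4) (hv : v ∉ C) :
    ∃ i s, (C.filter fun q => q i = s) ⊂ C ∧ (C.filter fun q => q i = c s) ⊂ C ∧
      IsFormalMinCover c (C.filter fun q => q i = s) (Function.update v i s) ∧
      IsFormalMinCover c (C.filter fun q => q i = c s) (Function.update v i (c s)) := by
  obtain ⟨w, hw, i, hwi, hcut⟩ := hC.exists_cut hc hc' hcard hv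
  obtain ⟨b, hb, hbi⟩ := hC.exists_apply_eq_compl hc hc' hw hwi
  refine ⟨i, w i, Finset.filter_ssubset.2 ⟨b, hb, by rw [hbi]; exact hc' _⟩,
    Finset.filter_ssubset.2 ⟨w, hw, (hc' _).symm⟩,
    hC.filter_apply_eq hc hc' (hC.not_dich w hw i) hcut,
    hC.filter_apply_eq hc hc' (hc.injective.ne hwi) ?_⟩
  simpa only [hc (w i), or_comm] using hcut

end IsFormalMinCover

end Covers

section Gluing

variable {α : Type} [DecidableEq α] {c : α → α} {d : ℕ}

theorem GCFix.mono {Q R V W : Finset (Fin d → α)} (h : GCFix c R V W) (hQR : Q ⊆ R) :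
    GCFix c Q V W :=
  Relation.ReflTransGen.mono (fun _ _ hstep => ⟨hstep.1, hQR.trans hstep.2⟩) _ _ h

theorem GCFix.gc {Q V W : Finset (Fin d → α)} (h : GCFix c Q V W) : GC c V W :=
  Relation.ReflTransGen.mono (fun _ _ hstep => hstep.1) _ _ h

theorem GCFix.subset {Q V W : Finset (Fin d → α)} (h : GCFix c Q V W) (hQ : Q ⊆ V) : Q ⊆ W := by
  rcases Relation.ReflTransGen.cases_tail h with rfl | ⟨_, -, hstep⟩
  · exact hQ
  · exact hstep.2

theorem exists_gcStep_of_update_mem (hc : Function.Involutive c) {W : Finset (Fin d → α)}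
    {v : Fin d → α} {i : Fin d} {s : α} (hs : Function.update v i s ∈ W)
    (hs' : Function.update v i (c s) ∈ W) :
    ∃ W', GCStep c W W' ∧ v ∈ W' ∧
      W \ {Function.update v i s, Function.update v i (c s)} ⊆ W' := by
  refine ⟨_, ⟨_, _, v, Function.update v i (c (v i)), i, hs, hs', ⟨?_, fun j hj => ?_⟩,
    ⟨?_, fun j hj => ?_⟩, fun j hj => ?_, rfl⟩, by simp, Finset.subset_union_left⟩ <;>
  simp [*, hc _]

/-- `Q` protects the words of one half of a cut while the other half is being glued. -/
theorem IsFormalMinCover.exists_gcFix (hc : Function.Involutive c) (hc' : ∀ s, c s ≠ s)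
    {C Q V : Finset (Fin d → α)} {v : Fin d → α} (hC : IsFormalMinCover c C v)
    (hcard : C.card ≤ 4) (hCV : C ⊆ V) (hQV : Q ⊆ V) (hQ : ∀ z ∈ Q, ∀ q ∈ C, Dich c z q) :
    ∃ W, GCFix c Q V W ∧ v ∈ W := by
  induction C using Finset.strongInduction generalizing Q V v with
  | H C ih =>
  by_cases hv : v ∈ C
  · exact ⟨V, Relation.ReflTransGen.refl, hCV hv⟩
  obtain ⟨i, s, hAC, hBC, hA, hB⟩ := hC.exists_halves hc hc' hcard hv
  set A := C.filter fun q => q i = s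
  set B := C.filter fun q => q i = c s
  have hQA : ∀ z ∈ Q, ∀ q ∈ A, Dich c z q := fun z hz q hq => hQ z hz q (hAC.subset hq)
  have hQB : ∀ z ∈ Q, ∀ q ∈ B, Dich c z q := fun z hz q hq => hQ z hz q (hBC.subset hq)
  have hBA : ∀ z ∈ B, ∀ q ∈ A, Dich c z q := fun z hz q hq =>
    ⟨i, by rw [(Finset.mem_filter.1 hz).2, (Finset.mem_filter.1 hq).2]⟩
  have hsB : ∀ q ∈ B, Dich c (Function.update v i s) q := fun q hq =>
    ⟨i, by simp [(Finset.mem_filter.1 hq).2, hc s]⟩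
  have hQBV : Q ∪ B ⊆ V := Finset.union_subset hQV (hBC.subset.trans hCV)
  obtain ⟨W₁, hW₁, hsW₁⟩ := ih A hAC hA ((Finset.card_le_card hAC.subset).trans hcard)
    (hAC.subset.trans hCV) hQBV (Finset.forall_mem_union.2 ⟨hQA, hBA⟩)
  obtain ⟨hQW₁, hBW₁⟩ := Finset.union_subset_iff.1 (hW₁.subset hQBV)
  have hsQW₁ := Finset.insert_subset hsW₁ hQW₁
  obtain ⟨W₂, hW₂, hsW₂'⟩ := ih B hBC hB ((Finset.card_le_card hBC.subset).trans hcard)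
    hBW₁ hsQW₁ (Finset.forall_mem_insert _ _ _ |>.2 ⟨hsB, hQB⟩)
  obtain ⟨hsW₂, hQW₂⟩ := Finset.insert_subset_iff.1 (hW₂.subset hsQW₁)
  obtain ⟨W, hstep, hvW, hW⟩ := exists_gcStep_of_update_mem hc hsW₂ hsW₂'
  have hQW : Q ⊆ W := fun z hz => hW <| by
    simp only [Finset.mem_sdiff, Finset.mem_insert, Finset.mem_singleton, not_or]
    refine ⟨hQW₂ hz, ?_, ?_⟩ <;> rintro rfl
    · exact hA.notMem_of_forall_dich hc hc' hQA hz
    · exact hB.notMem_of_forall_dich hc hc' hQB hz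
  exact ⟨W, ((hW₁.mono Finset.subset_union_left).trans
    (hW₂.mono (Finset.subset_insert _ _))).tail ⟨hstep, hQW⟩, hvW⟩

end Gluing

theorem small_min_cover_reaches_word_general {S : Type} [DecidableEq S] (c : S → S)
    (hc : ∀ s, c (c s) = s) (hc' : ∀ s, c s ≠ s) {d : ℕ} (v : Fin d → S)
    (C : Finset (Fin d → S)) (hcode : IsCode c C) (hcov : CoveredWord c v C)
    (hcard : (C.filter fun q => ¬ Dich c q v).card ≤ 4) :
    ∃ C' : Finset (Fin d → S), GC c C C' ∧ v ∈ C' := by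
  have hmin := (hcov.formallyCovered hc hc').isFormalMinCover_filter hc hcode
  obtain ⟨W, hW, hvW⟩ := hmin.exists_gcFix (Q := ∅) hc hc' hcard (Finset.filter_subset _ _)
    (Finset.empty_subset _) (by simp)
  exact ⟨W, hW.gc, hvW⟩

/-- Lemma "four" of the paper. -/
theorem small_min_cover_reaches_word
    {S : Type} [Fintype S] [DecidableEq S] (c : S → S)
    (hc : ∀ s, c (c s) = s) (hc' : ∀ s, c s ≠ s) {d : ℕ}
    (v : Fin d → S) (C : Finset (Fin d → S))
    (hmin : MinCoverWord c C v) (hcard : C.card ≤ 4) :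
    ∃ C' : Finset (Fin d → S), GC c C C' ∧ v ∈ C' :=
  small_min_cover_reaches_word_general c hc hc' v C hmin.1 hmin.2.1
    ((Finset.card_filter_le _ _).trans hcard)

end PolyboxPaper
end

section
/- If V, W ⊆ S^d are equivalent polybox codes, then β(V) = β(W) for every map b : S → {0,1} satisfying b(s) + b(s') = 1 for all s ∈ S. -/
/- Common framework: polybox codes over a finite alphabet `S` with a
complementation `c : S → S` (an involution without fixed points). -/

namespace PolyboxPaper

variable {S : Type} [Fintype S] [DecidableEq S] {d : ℕ}

section BinaryLabelling

variable {α : Type} {κ : Type*} {c : α → α}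

/-- The complementation `c` exchanges the two values of the labelling `b`. For labels in an
arbitrary type this replaces the condition `b(s) + b(s') = 1`: the fibre of `b` through `c s` is
the complement of the fibre through `s`. -/
def IsBinaryLabelling (c : α → α) (b : α → κ) : Prop :=
  ∀ s t, b t = b (c s) ↔ b t ≠ b s

/-- The realization that sends each letter to the set of letters with the same label. Its underlying
sets are the alphabet itself, so the points of its boxes are words; this is what turns covering
into a comparison of binary codes `Pi.map b v`. -/
def fiberRealization (b : Fin d → α → κ) (i : Fin d) (s : α) : Set α :=
  {t | b i t = b i s}

theorem isBinaryLabelling_of_add_eq_one {b : α → ℕ} (hb : ∀ s, b s + b (c s) = 1) :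
    IsBinaryLabelling c b := by
  intro s t
  have hs := hb s
  have ht := hb t
  omega

theorem isRealization_fiberRealization {b : Fin d → α → κ}
    (hb : ∀ i, IsBinaryLabelling c (b i)) :
    IsRealization c (fun _ => α) (fiberRealization b) := by
  intro i s
  have label_compl_ne : b i (c s) ≠ b i s := (hb i s (c s)).mp rfl
  exact ⟨⟨s, rfl⟩, (Set.ne_univ_iff_exists_notMem _).mpr ⟨c s, label_compl_ne⟩,
    Set.ext (hb i s)⟩

theorem mem_box_fiberRealization {b : Fin d → α → κ} {v w : Fin d → α} :
    v ∈ box (fiberRealization b) w ↔ Pi.map b v = Pi.map b w :=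
  funext_iff.symm

theorem CoveredWord.map_mem_image [DecidableEq κ] {v : Fin d → α} {W : Finset (Fin d → α)}
    (hv : CoveredWord c v W) {b : Fin d → α → κ} (hb : ∀ i, IsBinaryLabelling c (b i)) :
    Pi.map b v ∈ W.image (Pi.map b) := by
  have hmem : v ∈ ⋃ w ∈ W, box (fiberRealization b) w :=
    hv _ _ (isRealization_fiberRealization hb) (mem_box_fiberRealization.mpr rfl)
  obtain ⟨w, hw, hvw⟩ := Set.mem_iUnion₂.mp hmem
  exact Finset.mem_image.mpr ⟨w, hw, (mem_box_fiberRealization.mp hvw).symm⟩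

theorem Covered.image_map_subset [DecidableEq κ] {V W : Finset (Fin d → α)}
    (hVW : Covered c V W) {b : Fin d → α → κ} (hb : ∀ i, IsBinaryLabelling c (b i)) :
    V.image (Pi.map b) ⊆ W.image (Pi.map b) :=
  Finset.image_subset_iff.mpr fun v hv => (hVW v hv).map_mem_image hb

theorem equivalent_codes_same_binary_code_general [DecidableEq κ] {V W : Finset (Fin d → α)}
    (heq : Equivalent c V W) {b : Fin d → α → κ} (hb : ∀ i, IsBinaryLabelling c (b i)) :
    V.image (Pi.map b) = W.image (Pi.map b) :=
  (heq.1.image_map_subset hb).antisymm (heq.2.image_map_subset hb)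

end BinaryLabelling

/-- Lemma "index" of the paper: equivalent codes have the same
binary code. -/
theorem equivalent_codes_same_binary_code
    {S : Type} [Fintype S] [DecidableEq S] (c : S → S)
    (hc : ∀ s, c (c s) = s) (hc' : ∀ s, c s ≠ s) {d : ℕ}
    (V W : Finset (Fin d → S)) (hV : IsCode c V) (hW : IsCode c W)
    (heq : Equivalent c V W)
    (b : S → ℕ) (hb : ∀ s, b s + b (c s) = 1) :
    V.image (fun v (i : Fin d) => b (v i)) =
      W.image (fun v (i : Fin d) => b (v i)) := by
  exact equivalent_codes_same_binary_code_general heq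
    fun _ => isBinaryLabelling_of_add_eq_one hb

end PolyboxPaper
end
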